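/- For every real number x ≥ 1 that is not an integer, one has | x ( H(x) − log x − γ + (γ − 1)((2{x} − 1)x − {x}² + {x})/x² ) | ≤ 1; equivalently, the function ε₃ is differentiable at every non-integer x ≥ 1 and satisfies |x ε₃'(x)| ≤ 1 there. -/

import Mathlib

/-- `H(x) = ∑_{n ≤ x} 1/n`. -/
noncomputable def harmonicSum (x : ℝ) : ℝ := ∑ n ∈ Finset.Icc 1 ⌊x⌋₊, (1 : ℝ) / n

/-- `ε₂(x) = ∫_x^∞ ({t} - 1/2) t⁻² dt`. -/
noncomputable def eps2 (x : ℝ) : ℝ := ∫ t in Set.Ioi x, (Int.fract t - 1 / 2) / t ^ 2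

/-- `ε₃(x) = γ - 1/2 + x ε₂(x) + (γ - 1)({x}² - {x})/x`. -/
noncomputable def eps3 (x : ℝ) : ℝ :=
  Real.eulerMascheroniConstant - 1 / 2 + x * eps2 x
    + (Real.eulerMascheroniConstant - 1) * (Int.fract x ^ 2 - Int.fract x) / x

open Filter Topology MeasureTheory

namespace Eps3Aux

/-- `H_n - log n - γ`. -/
noncomputable def D (n : ℕ) : ℝ := (harmonic n : ℝ) - Real.log n - Real.eulerMascheroniConstant

lemma D_tendsto : Tendsto D atTop (𝓝 0) := by
  have h := Real.tendsto_harmonic_sub_log.sub_const Real.eulerMascheroniConstant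
  rw [sub_self] at h
  exact h

lemma inv_tendsto (a : ℝ) : Tendsto (fun n : ℕ => a / (n : ℝ)) atTop (𝓝 0) :=
  tendsto_const_div_atTop_nhds_zero_nat a

lemma harm_succ (n : ℕ) : ((harmonic (n + 1) : ℚ) : ℝ) = (harmonic n : ℝ) + 1 / ((n : ℝ) + 1) := by
  rw [harmonic_succ]; push_cast; simp

lemma log_succ (n : ℕ) (hn : 1 ≤ n) :
    Real.log ((n : ℝ) + 1) = Real.log n + Real.log (1 + 1 / n) := by
  have : (0 : ℝ) < n := by exact_mod_cast hn
  rw [← Real.log_mul (by positivity) (by positivity)]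
  congr 1; field_simp

lemma log_up (n : ℕ) (hn : 1 ≤ n) :
    Real.log (1 + 1 / (n : ℝ)) ≤ (1 / (n : ℝ) + 1 / ((n : ℝ) + 1)) / 2 := by
  have h0 : (0 : ℝ) < n := by exact_mod_cast hn
  have h1 : (0 : ℝ) < 1 + 1 / n := by positivity
  have h2 : 0 ≤ Real.log (1 + 1 / (n : ℝ)) :=
    Real.log_nonneg (by have : (0 : ℝ) ≤ 1 / n := by positivity
                        linarith)
  have h3 := Real.self_le_sinh_iff.2 h2
  rw [Real.sinh_log h1] at h3
  refine h3.trans (le_of_eq ?_)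
  field_simp
  ring

lemma log_lo (n : ℕ) (hn : 1 ≤ n) :
    2 / (2 * (n : ℝ) + 1) ≤ Real.log (1 + 1 / (n : ℝ)) := by
  have h0 : (0 : ℝ) < n := by exact_mod_cast hn
  have h := Real.le_log_one_add_of_nonneg (x := 1 / (n : ℝ)) (by positivity)
  refine le_trans (le_of_eq ?_) h
  field_simp
  ring

lemma D_up (n : ℕ) (hn : 1 ≤ n) : D n ≤ 1 / 2 / n := by
  have hmono : Monotone (fun k : ℕ => D (n + k) - 1 / 2 / ((n + k : ℕ) : ℝ)) := by
    refine monotone_nat_of_le_succ fun k => ?_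
    obtain ⟨m, hm⟩ : ∃ m, m = n + k := ⟨_, rfl⟩
    have hm1 : 1 ≤ m := by omega
    rw [← add_assoc, ← hm]
    simp only [D]
    push_cast
    rw [harm_succ, log_succ m hm1]
    have h0 : (0 : ℝ) < m := by exact_mod_cast hm1
    have := log_up m hm1
    have e1 : 1 / 2 / (m : ℝ) = 1 / m / 2 := by ring
    have e2 : 1 / 2 / ((m : ℝ) + 1) = 1 / (m + 1) / 2 := by ring
    rw [e1, e2]
    linarith
  have ht : Tendsto (fun k : ℕ => D (n + k) - 1 / 2 / ((n + k : ℕ) : ℝ)) atTop (𝓝 0) := by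
    have h := (D_tendsto.sub (inv_tendsto (1 / 2))).comp (tendsto_add_atTop_nat n)
    rw [sub_zero] at h
    refine h.congr fun k => ?_
    simp [add_comm]
  have := hmono.ge_of_tendsto ht 0
  simp only [add_zero] at this
  linarith

lemma D_lo (n : ℕ) (hn : 1 ≤ n) : 1 / 2 / n - 1 / 8 / (n : ℝ) ^ 2 ≤ D n := by
  have hmono : Antitone (fun k : ℕ => D (n + k) -
      (1 / 2 / ((n + k : ℕ) : ℝ) - 1 / 8 / ((n + k : ℕ) : ℝ) ^ 2)) := by
    refine antitone_nat_of_succ_le fun k => ?_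
    obtain ⟨m, hm⟩ : ∃ m, m = n + k := ⟨_, rfl⟩
    have hm1 : 1 ≤ m := by omega
    rw [← add_assoc, ← hm]
    simp only [D]
    push_cast
    rw [harm_succ, log_succ m hm1]
    have h0 : (0 : ℝ) < m := by exact_mod_cast hm1
    have := log_lo m hm1
    have key : 1 / ((m : ℝ) + 1) - (1 / 2 / ((m : ℝ) + 1) - 1 / 8 / ((m : ℝ) + 1) ^ 2)
        + (1 / 2 / (m : ℝ) - 1 / 8 / (m : ℝ) ^ 2) ≤ 2 / (2 * (m : ℝ) + 1) := by
      rw [← sub_nonneg]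
      have : 2 / (2 * (m : ℝ) + 1) - (1 / ((m : ℝ) + 1)
        - (1 / 2 / ((m : ℝ) + 1) - 1 / 8 / ((m : ℝ) + 1) ^ 2)
        + (1 / 2 / (m : ℝ) - 1 / 8 / (m : ℝ) ^ 2))
        = 1 / (8 * (2 * m + 1) * m ^ 2 * (m + 1) ^ 2) := by
        field_simp
        ring
      rw [this]; positivity
    linarith
  have ht : Tendsto (fun k : ℕ => D (n + k) -
      (1 / 2 / ((n + k : ℕ) : ℝ) - 1 / 8 / ((n + k : ℕ) : ℝ) ^ 2)) atTop (𝓝 0) := by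
    have h := (D_tendsto.sub ((inv_tendsto (1 / 2)).sub
      ((inv_tendsto (1 / 8)).mul (inv_tendsto 1)))).comp (tendsto_add_atTop_nat n)
    rw [mul_zero, sub_zero, sub_zero] at h
    refine h.congr fun k => ?_
    simp only [Function.comp, add_comm k n]
    ring
  have := hmono.le_of_tendsto ht 0
  simp only [add_zero] at this
  linarith

lemma gamma_gt : (9 : ℝ) / 16 < Real.eulerMascheroniConstant := by
  have h := D_up 4 (by norm_num)
  have hl : Real.log (4 : ℝ) = 2 * Real.log 2 := by
    rw [show (4 : ℝ) = 2 ^ 2 by norm_num, Real.log_pow]; norm_num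
  have hh : ((harmonic 4 : ℚ) : ℝ) = 25 / 12 := by
    have : harmonic 4 = 25 / 12 := by norm_num [harmonic, Finset.sum_range_succ]
    rw [this]; norm_num
  simp only [D, hh] at h
  push_cast at h
  rw [hl] at h
  have := Real.log_two_lt_d9
  norm_num at h ⊢
  linarith

lemma harmonicSum_eq (x : ℝ) : harmonicSum x = (harmonic ⌊x⌋₊ : ℝ) := by
  rw [harmonicSum, harmonic_eq_sum_Icc]
  push_cast
  simp

/-- the explicit form of `x ε₃'(x)` on `[n, n+1]`. -/
noncomputable def G (n : ℕ) (y : ℝ) : ℝ :=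
  y * ((harmonic n : ℝ) - Real.log y - Real.eulerMascheroniConstant)
    + (Real.eulerMascheroniConstant - 1)
      * ((2 * (y - n) - 1) + ((y - n) - (y - n) ^ 2) / y)

lemma G_deriv (n : ℕ) (y : ℝ) (hy : 0 < y) :
    HasDerivAt (G n) ((harmonic n : ℝ) - Real.log y - Real.eulerMascheroniConstant - 1
      + (Real.eulerMascheroniConstant - 1) * (1 + ((n : ℝ) ^ 2 + n) / y ^ 2)) y := by
  have h1 : HasDerivAt (fun y : ℝ => y - n) 1 y := (hasDerivAt_id y).sub_const _
  have hl := Real.hasDerivAt_log hy.ne'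
  have h2 := ((hl.const_sub (harmonic n : ℝ)).sub_const Real.eulerMascheroniConstant)
  have h3 := (hasDerivAt_id y).mul h2
  have h4 := ((h1.const_mul 2).sub_const 1).add ((h1.sub (h1.pow 2)).div (hasDerivAt_id y) hy.ne')
  have h5 := h3.add (h4.const_mul (Real.eulerMascheroniConstant - 1))
  refine (h5.congr_deriv ?_)
  simp
  field_simp
  ring

lemma G_anti (n : ℕ) (hn : 1 ≤ n) : AntitoneOn (G n) (Set.Icc n (n + 1)) := by
  have h0 : (1 : ℝ) ≤ n := by exact_mod_cast hn
  refine antitoneOn_of_deriv_nonpos (convex_Icc _ _) ?_ ?_ ?_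
  · intro y hy
    exact (G_deriv n y (by linarith [hy.1])).continuousAt.continuousWithinAt
  · intro y hy
    rw [interior_Icc] at hy
    exact (G_deriv n y (by linarith [hy.1])).differentiableAt.differentiableWithinAt
  · intro y hy
    rw [interior_Icc] at hy
    have hy0 : 0 < y := by linarith [hy.1]
    rw [(G_deriv n y hy0).deriv]
    have hD := D_up n hn
    have h12 : 1 / 2 / (n : ℝ) ≤ 1 := by
      rw [div_le_one (by linarith)]; linarith
    have hlog : Real.log n ≤ Real.log y := Real.log_le_log (by linarith) hy.1.le
    have hγ : Real.eulerMascheroniConstant - 1 ≤ 0 := by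
      linarith [Real.eulerMascheroniConstant_lt_two_thirds]
    have : (Real.eulerMascheroniConstant - 1) * (1 + ((n : ℝ) ^ 2 + n) / y ^ 2) ≤ 0 :=
      mul_nonpos_of_nonpos_of_nonneg hγ (by positivity)
    simp only [D] at hD
    linarith

lemma G_bound (n : ℕ) (hn : 1 ≤ n) (y : ℝ) (hy : y ∈ Set.Icc (n : ℝ) (n + 1)) : |G n y| ≤ 1 := by
  have h0 : (1 : ℝ) ≤ n := by exact_mod_cast hn
  have hpos : (0 : ℝ) < n := by linarith
  have hγ := gamma_gt
  rw [abs_le]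
  constructor
  · have h := G_anti n hn hy ⟨by linarith, le_refl _⟩ hy.2
    refine le_trans ?_ h
    have hD := D_lo (n + 1) (by omega)
    simp only [D, harm_succ] at hD
    push_cast at hD
    have hp : (0 : ℝ) < n + 1 := by linarith
    have h2 := mul_le_mul_of_nonneg_left hD hp.le
    have e1 : ((n : ℝ) + 1) * (1 / 2 / ((n : ℝ) + 1) - 1 / 8 / ((n : ℝ) + 1) ^ 2)
      = 1 / 2 - 1 / 8 / ((n : ℝ) + 1) := by field_simp
    have e2 : 1 / 8 / ((n : ℝ) + 1) ≤ 1 / 16 := by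
      rw [div_le_iff₀ hp]; linarith
    have e3 : ((n : ℝ) + 1) * ((harmonic n : ℝ) + 1 / ((n : ℝ) + 1) - Real.log ((n : ℝ) + 1)
      - Real.eulerMascheroniConstant) = ((n : ℝ) + 1) * ((harmonic n : ℝ) - Real.log ((n : ℝ) + 1)
      - Real.eulerMascheroniConstant) + 1 := by field_simp; ring
    rw [e1, e3] at h2
    have e4 : G n (n + 1) = ((n : ℝ) + 1) * ((harmonic n : ℝ) - Real.log ((n : ℝ) + 1)
      - Real.eulerMascheroniConstant) + (Real.eulerMascheroniConstant - 1) := by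
      simp only [G]
      have : (n : ℝ) + 1 - n = 1 := by ring
      rw [this]; norm_num
    rw [e4]
    linarith
  · have h := G_anti n hn ⟨le_refl _, by linarith⟩ hy hy.1
    refine h.trans ?_
    have hD := D_up n hn
    have h2 := mul_le_mul_of_nonneg_left hD hpos.le
    have e1 : (n : ℝ) * (1 / 2 / n) = 1 / 2 := by field_simp
    rw [e1] at h2
    simp only [G, D] at h2 ⊢
    rw [sub_self]
    norm_num
    linarith

lemma integ (y : ℝ) (hy : 0 < y) :
    IntegrableOn (fun t : ℝ => (Int.fract t - 1 / 2) / t ^ 2) (Set.Ioi y) := by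
  have h := integrableOn_Ioi_rpow_of_lt (a := -2) (by norm_num) hy
  refine Integrable.mono' h ?_ ?_
  · exact ((measurable_fract.sub_const _).div (measurable_id.pow_const 2)).aestronglyMeasurable
  · refine (ae_restrict_iff' measurableSet_Ioi).2 (Eventually.of_forall fun t ht => ?_)
    have ht0 : 0 < t := lt_trans hy ht
    have e : t ^ (-2 : ℝ) = 1 / t ^ 2 := by
      rw [Real.rpow_neg ht0.le]; norm_num
    rw [e, Real.norm_eq_abs, abs_div, abs_of_pos (by positivity : 0 < t ^ 2)]
    gcongr
    rw [abs_le]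
    constructor <;> linarith [Int.fract_nonneg t, Int.fract_lt_one t]

/-- closed form of `ε₂` on `[n, n+1]`. -/
noncomputable def F (n : ℕ) (y : ℝ) : ℝ :=
  (harmonic n : ℝ) - Real.log y - Real.eulerMascheroniConstant + (y - n - 1 / 2) / y

lemma F_deriv (n : ℕ) (y : ℝ) (hy : 0 < y) :
    HasDerivAt (F n) (- ((y - n - 1 / 2) / y ^ 2)) y := by
  have h1 : HasDerivAt (fun y : ℝ => y - n - 1 / 2) 1 y :=
    ((hasDerivAt_id y).sub_const _).sub_const _
  have h5 := (((Real.hasDerivAt_log hy.ne').const_sub (harmonic n : ℝ)).sub_const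
    Real.eulerMascheroniConstant).add (h1.div (hasDerivAt_id y) hy.ne')
  refine (h5.congr_deriv ?_)
  simp
  field_simp
  ring

lemma fract_eq (n : ℕ) (y : ℝ) (h1 : (n : ℝ) ≤ y) (h2 : y < n + 1) : Int.fract y = y - n := by
  rw [Int.fract_eq_iff]
  exact ⟨by linarith, by linarith, n, by simp⟩

lemma int_one (n : ℕ) (hn : 1 ≤ n) (y : ℝ) (h1 : (n : ℝ) ≤ y) (h2 : y < n + 1) :
    ∫ t in y..((n : ℝ) + 1), (Int.fract t - 1 / 2) / t ^ 2 = F n y - F n (n + 1) := by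
  have h0 : (1 : ℝ) ≤ n := by exact_mod_cast hn
  have hint : IntervalIntegrable (fun t : ℝ => (Int.fract t - 1 / 2) / t ^ 2) volume y (n + 1) := by
    rw [intervalIntegrable_iff_integrableOn_Ioc_of_le h2.le]
    exact (integ y (by linarith)).mono_set Set.Ioc_subset_Ioi_self
  have := intervalIntegral.integral_eq_sub_of_hasDerivAt_of_le (f := fun t => - F n t) h2.le
    (fun t ht => ((F_deriv n t (by linarith [ht.1])).neg).continuousAt.continuousWithinAt)
    (f' := fun t : ℝ => (Int.fract t - 1 / 2) / t ^ 2)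
    (fun t ht => by
      have := (F_deriv n t (by linarith [ht.1])).neg
      rw [neg_neg] at this
      rw [fract_eq n t (by linarith [ht.1]) ht.2]
      exact this) hint
  rw [this]; ring

lemma F_left (m : ℕ) : F m m = D m - 1 / 2 / m := by
  simp only [F, D]; ring

lemma F_right (m : ℕ) : F m (m + 1) = D (m + 1) - 1 / 2 / ((m + 1 : ℕ) : ℝ) := by
  simp only [F, D, harm_succ]
  push_cast
  have : (m : ℝ) + 1 ≠ 0 := by positivity
  field_simp
  ring

lemma int_many (n : ℕ) (hn : 1 ≤ n) (y : ℝ) (h1 : (n : ℝ) ≤ y) (h2 : y < n + 1) (k : ℕ) :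
    ∫ t in y..((n + 1 + k : ℕ) : ℝ), (Int.fract t - 1 / 2) / t ^ 2
      = F n y - (D (n + 1 + k) - 1 / 2 / ((n + 1 + k : ℕ) : ℝ)) := by
  have h0 : (1 : ℝ) ≤ n := by exact_mod_cast hn
  induction k with
  | zero =>
    have := int_one n hn y h1 h2
    rw [F_right] at this
    push_cast at this ⊢
    simpa using this
  | succ k ih =>
    obtain ⟨m, hm⟩ : ∃ m, m = n + 1 + k := ⟨_, rfl⟩
    have hm1 : 1 ≤ m := by omega
    have hmn : (n : ℝ) + 1 ≤ m := by rw [hm]; push_cast; linarith [(Nat.cast_nonneg k : (0 : ℝ) ≤ k)]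
    rw [← add_assoc, ← hm]
    rw [← hm] at ih
    have hI : ∀ a b : ℝ, 0 < a → a ≤ b →
        IntervalIntegrable (fun t : ℝ => (Int.fract t - 1 / 2) / t ^ 2) volume a b := by
      intro a b ha hab
      rw [intervalIntegrable_iff_integrableOn_Ioc_of_le hab]
      exact (integ a ha).mono_set Set.Ioc_subset_Ioi_self
    have h3 := int_one m hm1 m le_rfl (by linarith)
    rw [F_left m, F_right] at h3
    have h4 := intervalIntegral.integral_add_adjacent_intervals
      (hI y m (by linarith) (by linarith)) (hI m (m + 1) (by linarith) (by linarith))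
    rw [ih, h3] at h4
    rw [Nat.cast_succ] at *
    rw [← h4]
    ring

lemma eps2_eq (n : ℕ) (hn : 1 ≤ n) (y : ℝ) (h1 : (n : ℝ) ≤ y) (h2 : y < n + 1) :
    eps2 y = F n y := by
  have h0 : (1 : ℝ) ≤ n := by exact_mod_cast hn
  have hk : Tendsto (fun k : ℕ => n + 1 + k) atTop atTop := by
    simpa [add_comm] using tendsto_add_atTop_nat (n + 1)
  have ht := intervalIntegral_tendsto_integral_Ioi y (integ y (by linarith))
    ((tendsto_natCast_atTop_atTop (R := ℝ)).comp hk)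
  have ht2 : Tendsto (fun k : ℕ => F n y - (D (n + 1 + k) - 1 / 2 / ((n + 1 + k : ℕ) : ℝ))) atTop
      (𝓝 (F n y)) := by
    have h := ((D_tendsto.sub (inv_tendsto (1 / 2))).comp hk).const_sub (F n y)
    rw [sub_zero, sub_zero] at h
    exact h
  refine tendsto_nhds_unique ht (ht2.congr fun k => ?_)
  exact (int_many n hn y h1 h2 k).symm

end Eps3Aux

open Eps3Aux

/-- For every non-integer real `x ≥ 1`,
`|x (H(x) - log x - γ + (γ-1)((2{x}-1)x - {x}² + {x})/x²)| ≤ 1`;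
equivalently, `ε₃` is differentiable at `x` and `|x ε₃'(x)| ≤ 1`. -/
theorem eps3_deriv_bound (x : ℝ) (hx : 1 ≤ x) (hxi : ∀ n : ℤ, x ≠ n) :
    |x * (harmonicSum x - Real.log x - Real.eulerMascheroniConstant
        + (Real.eulerMascheroniConstant - 1)
          * ((2 * Int.fract x - 1) * x - Int.fract x ^ 2 + Int.fract x) / x ^ 2)| ≤ 1 ∧
      DifferentiableAt ℝ eps3 x ∧ |x * deriv eps3 x| ≤ 1 := by
  have hx0 : 0 < x := by linarith
  obtain ⟨n, hn⟩ : ∃ n, n = ⌊x⌋₊ := ⟨_, rfl⟩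
  have hn1 : 1 ≤ n := by rw [hn]; exact Nat.le_floor (by simpa using hx)
  have hle : (n : ℝ) ≤ x := by rw [hn]; exact Nat.floor_le hx0.le
  have hlt : (n : ℝ) < x := lt_of_le_of_ne hle fun h => hxi n (by simp [h])
  have hlt2 : x < n + 1 := by rw [hn]; exact Nat.lt_floor_add_one x
  have hb := G_bound n hn1 x ⟨hle, hlt2.le⟩
  have hf := fract_eq n x hle hlt2
  have hA : |x * (harmonicSum x - Real.log x - Real.eulerMascheroniConstant
        + (Real.eulerMascheroniConstant - 1)
          * ((2 * Int.fract x - 1) * x - Int.fract x ^ 2 + Int.fract x) / x ^ 2)| ≤ 1 := by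
    rw [harmonicSum_eq, ← hn, hf]
    convert hb using 2
    simp only [G]
    field_simp
    ring
  have hD : HasDerivAt eps3 (harmonicSum x - Real.log x - Real.eulerMascheroniConstant
        + (Real.eulerMascheroniConstant - 1)
          * ((2 * Int.fract x - 1) * x - Int.fract x ^ 2 + Int.fract x) / x ^ 2) x := by
    have h1 : HasDerivAt (fun y : ℝ => y - n) 1 x := (hasDerivAt_id x).sub_const _
    have h2 := (((hasDerivAt_id x).mul (F_deriv n x hx0)).const_add
      (Real.eulerMascheroniConstant - 1 / 2)).add
      ((((h1.pow 2).sub h1).const_mul (Real.eulerMascheroniConstant - 1)).div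
        (hasDerivAt_id x) hx0.ne')
    have h3 := h2.congr_of_eventuallyEq (f₁ := eps3) (by
      filter_upwards [Ioo_mem_nhds hlt hlt2] with y hy
      simp only [eps3, eps2_eq n hn1 y hy.1.le hy.2, fract_eq n y hy.1.le hy.2]
      simp)
    refine h3.congr_deriv ?_
    rw [harmonicSum_eq, ← hn, hf]
    simp [F]
    field_simp
    ring
  refine ⟨hA, hD.differentiableAt, ?_⟩
  rw [hD.deriv]
  exact hA
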